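/- Let n and a be strictly positive integers and let Q ⊆ ℝⁿ be a convex polytope all of whose vertices lie in (1/a)·ℤⁿ, such that the only point of ℤⁿ in the interior of Q is 0. Then vol(Q) ≤ (7(a+1))^{n·2^{n+1}}. -/

import Mathlib

/-- A point of `ℝⁿ` lies in the lattice `ℤⁿ`. -/
def IsLatticePoint {n : ℕ} (u : Fin n → ℝ) : Prop :=
  ∀ i, ∃ m : ℤ, u i = (m : ℝ)

/-!
The bound follows Lagarias and Ziegler. If `0` is the only interior lattice point of `Q = conv S`,
then `Q` cannot be too asymmetric about `0`, and Minkowski's argument bounds its volume.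

To bound the asymmetry, write `0 = ∑ βᵢ zᵢ` as a positive convex combination of affinely
independent points of `S`, one of them prescribed. If integers `Pᵢ` with sum `q > 0` approximate
`q βᵢ` so well that `a Pᵢ < (1 + a q) βᵢ`, then `-∑ Pᵢ (a zᵢ) = ∑ ((1 + a q) βᵢ - a Pᵢ) zᵢ` is a
lattice point in the interior of `Q`, hence `0`, and affine independence gives `Pᵢ = q βᵢ`.
Dirichlet's theorem yields such `P` vanishing at a given nonempty set of indices as soon as the
`βᵢ` there are small compared with the others, which is therefore impossible. So no group
of the `βᵢ` is much smaller than the rest, and this bounds every `βᵢ` from below by a quantity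
doubly exponential in the dimension.
-/

open Finset Module MeasureTheory Topology

/-! ### Diophantine approximation -/

theorem exists_nat_forall_abs_mul_sub_round_lt {ι : Type*} (J : Finset ι) (β : ι → ℝ) {T : ι → ℕ}
    (hT : ∀ i ∈ J, 0 < T i) :
    ∃ q : ℕ, 0 < q ∧ q ≤ ∏ i ∈ J, T i ∧
      ∀ i ∈ J, |(q : ℝ) * β i - round ((q : ℝ) * β i)| < 1 / T i := by
  classical
  let box : ℕ → J → ℤ := fun k i ↦ ⌊Int.fract (k * β i) * T i⌋
  have hbox : Set.MapsTo box (range (∏ i ∈ J, T i + 1))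
      (Fintype.piFinset fun i : J ↦ Ico 0 (T i : ℤ)) := by
    intro k _
    rw [mem_coe, Fintype.mem_piFinset]
    intro i
    have hTi : (0 : ℝ) < T i := mod_cast hT i i.2
    have hnonneg : 0 ≤ Int.fract (k * β i) * T i := mul_nonneg (Int.fract_nonneg _) hTi.le
    have hlt : Int.fract (k * β i) * T i < T i := mul_lt_of_lt_one_left hTi (Int.fract_lt_one _)
    exact mem_Ico.2 ⟨Int.floor_nonneg.2 hnonneg, Int.floor_lt.2 hlt⟩
  have hcard : #(Fintype.piFinset fun i : J ↦ Ico 0 (T i : ℤ)) < #(range (∏ i ∈ J, T i + 1)) := by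
    simp [Fintype.card_piFinset, prod_attach J T]
  obtain ⟨x, hx, y, hy, hne, hxy⟩ := exists_ne_map_eq_of_card_lt_of_maps_to hcard hbox
  wlog hlt : x < y generalizing x y
  · exact this y hy x hx hne.symm hxy.symm (by omega)
  rw [mem_range] at hy
  refine ⟨y - x, by omega, by omega, fun i hi ↦ ?_⟩
  have hTi : (0 : ℝ) < T i := mod_cast hT i hi
  have hfract : ((y - x : ℕ) : ℝ) * β i - (⌊y * β i⌋ - ⌊x * β i⌋ : ℤ) =
      Int.fract (y * β i) - Int.fract (x * β i) := by
    rw [Nat.cast_sub hlt.le]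
    simp only [Int.fract]
    push_cast
    ring
  refine (round_le _ (⌊y * β i⌋ - ⌊x * β i⌋)).trans_lt ?_
  rw [hfract, lt_div_iff₀ hTi, ← abs_of_pos hTi, ← abs_mul, sub_mul]
  exact Int.abs_sub_lt_one_of_floor_eq_floor (congrFun hxy ⟨i, hi⟩).symm

theorem exists_nat_forall_abs_mul_sub_round_le_div {ι : Type*} {J : Finset ι} {β : ι → ℝ} {C : ℝ}
    (hβ : ∀ i ∈ J, 0 < β i) (hβ_le : ∀ i ∈ J, β i ≤ 1) (hC : 0 < C) :
    ∃ q : ℕ, 0 < q ∧ (q : ℝ) ≤ ∏ i ∈ J, (C + 1) / β i ∧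
      ∀ i ∈ J, |(q : ℝ) * β i - round ((q : ℝ) * β i)| ≤ β i / C := by
  have hdiv : ∀ i ∈ J, 0 < C / β i := fun i hi ↦ div_pos hC (hβ i hi)
  obtain ⟨q, hq, hqT, happrox⟩ := exists_nat_forall_abs_mul_sub_round_lt J β
    (T := fun i ↦ ⌈C / β i⌉₊) fun i hi ↦ Nat.ceil_pos.2 (hdiv i hi)
  refine ⟨q, hq, ?_, fun i hi ↦ (happrox i hi).le.trans ?_⟩
  · calc (q : ℝ) ≤ ∏ i ∈ J, (⌈C / β i⌉₊ : ℝ) := mod_cast hqT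
      _ ≤ ∏ i ∈ J, (C + 1) / β i := by
        refine prod_le_prod (fun _ _ ↦ by positivity) fun i hi ↦ ?_
        have hone : 1 ≤ 1 / β i := (one_le_div (hβ i hi)).2 (hβ_le i hi)
        rw [add_div]
        exact (Nat.ceil_lt_add_one (hdiv i hi).le).le.trans (by gcongr)
  · rw [← one_div_div C]
    exact one_div_le_one_div_of_le (hdiv i hi) (Nat.le_ceil _)

theorem sum_eq_of_forall_abs_mul_sub_le_half {ι : Type*} {J : Finset ι} {β : ι → ℝ} {P : ι → ℤ}
    {q : ℕ} (hJ : ∑ i ∈ J, β i < 1) (happrox : ∀ i ∈ J, |q * β i - P i| ≤ β i / 2)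
    (hq : q * (1 - ∑ i ∈ J, β i) ≤ 1 / 2) : ∑ i ∈ J, P i = q := by
  have herr : |∑ i ∈ J, (q * β i - P i)| ≤ (∑ i ∈ J, β i) / 2 :=
    calc |∑ i ∈ J, (q * β i - P i)| ≤ ∑ i ∈ J, |q * β i - P i| := abs_sum_le_sum_abs _ _
      _ ≤ ∑ i ∈ J, β i / 2 := sum_le_sum happrox
      _ = (∑ i ∈ J, β i) / 2 := (sum_div _ _ _).symm
  have hsplit : (q : ℝ) - ∑ i ∈ J, (P i : ℝ) =
      ∑ i ∈ J, (q * β i - P i) + q * (1 - ∑ i ∈ J, β i) := by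
    rw [sum_sub_distrib, ← mul_sum]
    ring
  have hrest : 0 ≤ q * (1 - ∑ i ∈ J, β i) := mul_nonneg q.cast_nonneg (sub_nonneg.2 hJ.le)
  have hlt : |(q : ℝ) - ∑ i ∈ J, (P i : ℝ)| < 1 := by
    rw [hsplit, abs_lt]
    constructor <;> linarith [abs_le.1 herr]
  have hzero : (q : ℤ) - ∑ i ∈ J, P i = 0 := Int.abs_lt_one_iff.1 (mod_cast hlt)
  linarith

theorem exists_int_approx_of_prod_mul_sum_compl_le {ι : Type*} [Fintype ι] [DecidableEq ι]
    {β : ι → ℝ} (hβ : ∀ i, 0 < β i) (hβ_sum : ∑ i, β i = 1) {a : ℝ} (ha : 1 ≤ a) {J : Finset ι}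
    (hJ : Jᶜ.Nonempty) (h : (∏ i ∈ J, (a + 2) / β i) * ∑ i ∈ Jᶜ, β i ≤ 1 / 2) :
    ∃ (q : ℕ) (P : ι → ℤ), 0 < q ∧ ∑ i, P i = q ∧ (∀ i ∈ Jᶜ, P i = 0) ∧
      ∀ i, a * P i < (1 + a * q) * β i := by
  have hβ_le (i) : β i ≤ 1 := hβ_sum ▸ single_le_sum (fun j _ ↦ (hβ j).le) (mem_univ i)
  have hcompl : ∑ i ∈ Jᶜ, β i = 1 - ∑ i ∈ J, β i := by rw [← hβ_sum, ← sum_compl_add_sum J]; ring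
  have hcompl_pos : 0 < ∑ i ∈ Jᶜ, β i := sum_pos (fun i _ ↦ hβ i) hJ
  obtain ⟨q, hq, hq_le, happrox⟩ := exists_nat_forall_abs_mul_sub_round_le_div
    (J := J) (C := a + 1) (fun i _ ↦ hβ i) (fun i _ ↦ hβ_le i) (by linarith)
  rw [show a + 1 + 1 = a + 2 by ring] at hq_le
  have hq_half : q * (1 - ∑ i ∈ J, β i) ≤ 1 / 2 := by
    rw [← hcompl]
    exact (mul_le_mul_of_nonneg_right hq_le hcompl_pos.le).trans h
  refine ⟨q, fun i ↦ if i ∈ J then round (q * β i) else 0, hq, ?_, ?_, fun i ↦ ?_⟩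
  · rw [sum_ite_mem, univ_inter]
    refine sum_eq_of_forall_abs_mul_sub_le_half (by linarith) (fun i hi ↦ ?_) hq_half
    exact (happrox i hi).trans (div_le_div_of_nonneg_left (hβ i).le two_pos (by linarith))
  · exact fun i hi ↦ if_neg (mem_compl.1 hi)
  · beta_reduce
    split_ifs with hi
    · have herr := (abs_le.1 (happrox i hi)).1
      have hsmall : a * (β i / (a + 1)) < β i := by
        rw [mul_div_assoc', div_lt_iff₀ (by linarith)]
        linarith [hβ i]
      nlinarith
    · have hpos : 0 < (1 + a * q) * β i := mul_pos (by positivity) (hβ i)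
      simpa using hpos

/-! ### Weights none of whose groups is much smaller than the rest -/

theorem exists_subset_forall_mul_half_pow_le {ι : Type*} {S : Finset ι} {β : ι → ℝ}
    {ε : ℝ} (hε : 0 < ε) (hS : ε ≤ ∑ i ∈ S, β i) :
    ∃ I ⊆ S, I.Nonempty ∧ ∀ i ∈ I, ε * (1 / 2) ^ #I ≤ β i := by
  classical
  by_contra! hsmall
  have hsum : ∀ I ⊆ S, ∑ i ∈ I, β i ≤ ε * (1 - (1 / 2) ^ #I) := by
    intro I
    induction I using Finset.strongInduction with
    | H I ih =>
      intro hI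
      obtain rfl | hne := I.eq_empty_or_nonempty
      · simp
      obtain ⟨i, hi, hlt⟩ := hsmall I hI hne
      have herase := ih (I.erase i) (erase_ssubset hi) ((erase_subset i I).trans hI)
      rw [← card_erase_add_one hi, pow_succ] at hlt ⊢
      rw [← add_sum_erase I β hi]
      linarith
  have hpow : 0 < ε * (1 / 2 : ℝ) ^ #S := by positivity
  linarith [hsum S subset_rfl]

theorem two_mul_mul_two_pow_mul_pow_le {x : ℝ} (hx : 2 ≤ x) (k : ℕ) :
    2 * x * (2 ^ k * x) ^ k ≤ (2 * x) ^ 2 ^ k := by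
  induction k with
  | zero => simp
  | succ k ih =>
    calc 2 * x * (2 ^ (k + 1) * x) ^ (k + 1)
        = 2 * x * (2 ^ k * x) ^ k * (2 ^ k * 2 ^ k * (2 * x)) := by ring
      _ ≤ (2 * x) ^ 2 ^ k * (2 ^ k * x ^ k * (2 * x)) := by gcongr
      _ ≤ (2 * x) ^ 2 ^ k * (2 * x) ^ 2 ^ k := by
        rw [← mul_pow, ← pow_succ]
        gcongr
        · linarith
        · exact Nat.lt_two_pow_self
      _ = (2 * x) ^ 2 ^ (k + 1) := by ring

section Weights

variable {ι : Type*} [Fintype ι] [DecidableEq ι] {β : ι → ℝ} {C : ℝ}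

theorem exists_disjoint_mul_prod_union_le_pow (hβ : ∀ i, 0 < β i) (hβ_le : ∀ i, β i ≤ 1)
    (hC : 1 ≤ C) {J : Finset ι} (hJ : 1 / 2 < (∏ i ∈ J, C / β i) * ∑ i ∈ Jᶜ, β i) :
    ∃ I : Finset ι, I.Nonempty ∧ Disjoint J I ∧
      4 * C * ∏ i ∈ J ∪ I, C / β i ≤ (4 * C * ∏ i ∈ J, C / β i) ^ 2 ^ #I := by
  have hone (i) : 1 ≤ C / β i := (one_le_div (hβ i)).2 ((hβ_le i).trans hC)
  set x := 2 * C * ∏ i ∈ J, C / β i with hx_def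
  have hx : 2 ≤ x := by
    have hprod : 1 ≤ ∏ i ∈ J, C / β i := one_le_prod fun i _ ↦ hone i
    nlinarith
  have hlarge : C / x ≤ ∑ i ∈ Jᶜ, β i := by
    rw [div_le_iff₀ (by linarith)]
    nlinarith
  obtain ⟨I, hIJ, hI, hIβ⟩ := exists_subset_forall_mul_half_pow_le (by positivity) hlarge
  have hdisj : Disjoint J I := disjoint_right.2 fun i hi ↦ mem_compl.1 (hIJ hi)
  have hfactor : ∀ i ∈ I, C / β i ≤ 2 ^ #I * x := by
    intro i hi
    rw [div_le_iff₀ (hβ i)]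
    calc C = 2 ^ #I * x * (C / x * (1 / 2) ^ #I) := by
          rw [one_div_pow]
          field_simp
      _ ≤ 2 ^ #I * x * β i := by gcongr; exact hIβ i hi
  have htwo : 4 * C * ∏ i ∈ J, C / β i = 2 * x := by rw [hx_def]; ring
  refine ⟨I, hI, hdisj, ?_⟩
  calc 4 * C * ∏ i ∈ J ∪ I, C / β i = 2 * x * ∏ i ∈ I, C / β i := by
        rw [prod_union hdisj, ← mul_assoc, htwo]
    _ ≤ 2 * x * (2 ^ #I * x) ^ #I := by
        rw [← prod_const]
        gcongr with i hi
        · exact fun i _ ↦ zero_le_one.trans (hone i)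
        · exact hfactor i hi
    _ ≤ (2 * x) ^ 2 ^ #I := two_mul_mul_two_pow_mul_pow_le hx _
    _ = (4 * C * ∏ i ∈ J, C / β i) ^ 2 ^ #I := by rw [htwo]

theorem mul_prod_div_le_pow_two_pow_card (hβ : ∀ i, 0 < β i) (hβ_le : ∀ i, β i ≤ 1) (hC : 1 ≤ C)
    (h : ∀ J : Finset ι, Jᶜ.Nonempty → 1 / 2 < (∏ i ∈ J, C / β i) * ∑ i ∈ Jᶜ, β i) :
    4 * C * ∏ i, C / β i ≤ (4 * C) ^ 2 ^ Fintype.card ι := by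
  obtain ⟨J, hJ⟩ := (Set.toFinite
    {J : Finset ι | 4 * C * ∏ i ∈ J, C / β i ≤ (4 * C) ^ 2 ^ #J}).exists_maximal ⟨∅, by simp⟩
  obtain hJc | hJc := Jᶜ.eq_empty_or_nonempty
  · rw [compl_eq_empty_iff] at hJc
    subst hJc
    exact hJ.prop
  obtain ⟨I, hI, hdisj, hstep⟩ := exists_disjoint_mul_prod_union_le_pow hβ hβ_le hC (h J hJc)
  have hunion : 4 * C * ∏ i ∈ J ∪ I, C / β i ≤ (4 * C) ^ 2 ^ #(J ∪ I) := by
    rw [card_union_of_disjoint hdisj, pow_add, pow_mul]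
    refine hstep.trans (pow_le_pow_left₀ ?_ hJ.prop _)
    exact mul_nonneg (by linarith) (prod_nonneg fun i _ ↦ div_nonneg (by linarith) (hβ i).le)
  have hIJ : I ⊆ J := subset_union_right.trans (hJ.le_of_ge hunion subset_union_left)
  exact absurd (disjoint_self_iff_empty I |>.1 (hdisj.mono_left hIJ)) hI.ne_empty

theorem inv_le_pow_two_pow_card (hβ : ∀ i, 0 < β i) (hβ_le : ∀ i, β i ≤ 1) (hC : 1 ≤ C)
    (h : ∀ J : Finset ι, Jᶜ.Nonempty → 1 / 2 < (∏ i ∈ J, C / β i) * ∑ i ∈ Jᶜ, β i) (i : ι) :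
    (β i)⁻¹ ≤ (4 * C) ^ 2 ^ Fintype.card ι := by
  have hone (j) : 1 ≤ C / β j := (one_le_div (hβ j)).2 ((hβ_le j).trans hC)
  calc (β i)⁻¹ ≤ C / β i := by
        rw [div_eq_mul_inv]
        exact le_mul_of_one_le_left (inv_pos.2 (hβ i)).le hC
    _ ≤ ∏ j, C / β j := by
        rw [← mul_prod_erase univ _ (mem_univ i)]
        exact le_mul_of_one_le_right (by linarith [hone i]) (one_le_prod fun j _ ↦ hone j)
    _ ≤ 4 * C * ∏ j, C / β j :=
        le_mul_of_one_le_left (prod_nonneg fun j _ ↦ by linarith [hone j]) (by linarith)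
    _ ≤ (4 * C) ^ 2 ^ Fintype.card ι := mul_prod_div_le_pow_two_pow_card hβ hβ_le hC h

end Weights

/-! ### Simplices around an interior point -/

section Caratheodory

variable {𝕜 E : Type*} [Field 𝕜] [AddCommGroup E] [Module 𝕜 E]

theorem affineIndependent_option_elim {ι : Type*} [Fintype ι] {u : ι → E} {c : ι → 𝕜}
    (hu : LinearIndependent 𝕜 u) (hc : 1 + ∑ i, c i ≠ 0) :
    AffineIndependent 𝕜 fun o : Option ι ↦ o.elim (-∑ i, c i • u i) u := by
  refine (affineIndependent_iff_of_fintype 𝕜 _).2 fun w hw_sum hw ↦ ?_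
  rw [weightedVSub_eq_linear_combination _ hw_sum] at hw
  simp only [Fintype.sum_option, Option.elim_none, Option.elim_some] at hw_sum hw
  have hsome : ∀ i, w (some i) = w none * c i := by
    refine fun i ↦ sub_eq_zero.1 (Fintype.linearIndependent_iff.1 hu
      (fun i ↦ w (some i) - w none * c i) ?_ i)
    simp only [sub_smul, mul_smul, sum_sub_distrib, ← smul_sum]
    rw [← hw, smul_neg]
    abel
  have hnone : w none = 0 := by
    simp only [hsome, ← mul_sum] at hw_sum
    refine (mul_eq_zero.1 ?_).resolve_right hc
    rw [← hw_sum]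
    ring
  rintro (_ | i)
  · exact hnone
  · rw [hsome, hnone, zero_mul]

variable [LinearOrder 𝕜] [IsStrictOrderedRing 𝕜]

theorem exists_sum_erase_smul_eq [DecidableEq E] {t : Finset E} {c : E → 𝕜}
    (hc : ∀ e ∈ t, 0 ≤ c e) (ht : ¬LinearIndepOn 𝕜 id (t : Set E)) :
    ∃ e₀ ∈ t, ∃ d : E → 𝕜, (∀ e ∈ t, 0 ≤ d e) ∧
      ∑ e ∈ t.erase e₀, d e • e = ∑ e ∈ t, c e • e := by
  obtain ⟨g, hg_sum, e₁, he₁, hg⟩ := not_linearIndepOn_finset_iff.1 ht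
  simp only [id_eq] at hg_sum
  wlog hpos : 0 < g e₁ generalizing g
  · refine this (-g) (neg_ne_zero.2 hg) ?_ (neg_pos.2 (hg.lt_of_le (not_lt.1 hpos)))
    simp only [Pi.neg_apply, neg_smul, sum_neg_distrib, hg_sum, neg_zero]
  obtain ⟨e₀, he₀, hmin⟩ := {e ∈ t | 0 < g e}.exists_min_image (fun e ↦ c e / g e)
    ⟨e₁, mem_filter.2 ⟨he₁, hpos⟩⟩
  obtain ⟨he₀t, hge₀⟩ := mem_filter.1 he₀
  have hratio : 0 ≤ c e₀ / g e₀ := div_nonneg (hc e₀ he₀t) hge₀.le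
  let d : E → 𝕜 := fun e ↦ c e - c e₀ / g e₀ * g e
  have hd_zero : d e₀ • e₀ = 0 := by simp only [d, div_mul_cancel₀ _ hge₀.ne', sub_self, zero_smul]
  refine ⟨e₀, he₀t, d, fun e he ↦ sub_nonneg.2 ?_, ?_⟩
  · obtain hge | hge := le_or_gt (g e) 0
    · exact (mul_nonpos_of_nonneg_of_nonpos hratio hge).trans (hc e he)
    · exact (le_div_iff₀ hge).1 (hmin e (mem_filter.2 ⟨he, hge⟩))
  · rw [sum_erase (f := fun e ↦ d e • e) t hd_zero]
    simp only [d, sub_smul, mul_smul, sum_sub_distrib, ← smul_sum, hg_sum, smul_zero, sub_zero]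

theorem exists_subset_pos_linearIndepOn_sum_smul_eq {t : Finset E} {c : E → 𝕜}
    (hc : ∀ e ∈ t, 0 ≤ c e) :
    ∃ t' ⊆ t, ∃ c' : E → 𝕜, (∀ e ∈ t', 0 < c' e) ∧ LinearIndepOn 𝕜 id (t' : Set E) ∧
      ∑ e ∈ t', c' e • e = ∑ e ∈ t, c e • e := by
  classical
  induction t using Finset.strongInduction generalizing c with
  | H t ih =>
    suffices h : ((∀ e ∈ t, 0 < c e) ∧ LinearIndepOn 𝕜 id (t : Set E)) ∨
        ∃ e₀ ∈ t, ∃ d : E → 𝕜, (∀ e ∈ t, 0 ≤ d e) ∧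
          ∑ e ∈ t.erase e₀, d e • e = ∑ e ∈ t, c e • e by
      obtain ⟨hpos, hind⟩ | ⟨e₀, he₀, d, hd, hsum⟩ := h
      · exact ⟨t, subset_rfl, c, hpos, hind, rfl⟩
      · obtain ⟨t', ht', h⟩ := ih _ (erase_ssubset he₀) fun e he ↦ hd e (mem_of_mem_erase he)
        exact ⟨t', ht'.trans (erase_subset _ _), hsum ▸ h⟩
    by_cases hpos : ∀ e ∈ t, 0 < c e
    · by_cases hind : LinearIndepOn 𝕜 id (t : Set E)
      · exact .inl ⟨hpos, hind⟩
      · exact .inr (exists_sum_erase_smul_eq hc hind)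
    · push Not at hpos
      obtain ⟨e₀, he₀, hle⟩ := hpos
      have hzero : c e₀ • e₀ = 0 := by rw [hle.antisymm (hc e₀ he₀), zero_smul]
      exact .inr ⟨e₀, he₀, c, hc, sum_erase t hzero⟩

theorem exists_pos_linearIndepOn_sum_smul_eq_of_mem_hull {s : Set E} {x : E}
    (hx : x ∈ PointedCone.hull 𝕜 s) :
    ∃ (t : Finset E) (c : E → 𝕜), ↑t ⊆ s ∧ (∀ e ∈ t, 0 < c e) ∧
      LinearIndepOn 𝕜 id (t : Set E) ∧ ∑ e ∈ t, c e • e = x := by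
  obtain ⟨c, hcs, hc, rfl⟩ := PointedCone.mem_hull_set.1 hx
  obtain ⟨t, ht, c', hc', hind, hsum⟩ :=
    exists_subset_pos_linearIndepOn_sum_smul_eq (t := c.support) fun e _ ↦ hc e
  exact ⟨t, c', (coe_subset.2 ht).trans hcs, hc', hind, hsum⟩

end Caratheodory

section Interior

variable {E : Type*} [AddCommGroup E] [Module ℝ E] [TopologicalSpace E]

theorem mem_hull_of_zero_mem_interior_convexHull [ContinuousSMul ℝ E] {s : Set E}
    (hs : 0 ∈ interior (convexHull ℝ s)) (x : E) : x ∈ PointedCone.hull ℝ s := by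
  have hsub : convexHull ℝ s ⊆ PointedCone.hull ℝ s :=
    convexHull_min PointedCone.subset_hull (PointedCone.hull ℝ s).convex
  have habs : Absorbent ℝ (convexHull ℝ s) := absorbent_nhds_zero (mem_interior_iff_mem_nhds.1 hs)
  obtain ⟨r, hr, hx⟩ := (habs x).exists_pos
  obtain ⟨y, hy, rfl⟩ := hx r (Real.norm_of_nonneg hr.le).ge rfl
  exact (PointedCone.hull ℝ s).smul_mem hr.le (hsub hy)

theorem exists_affineIndependent_option_elim_sum_smul_eq_zero [ContinuousSMul ℝ E] {s : Set E}
    (hs : 0 ∈ interior (convexHull ℝ s)) (v : E) :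
    ∃ (t : Finset E) (β : Option t → ℝ), ↑t ⊆ s ∧
      AffineIndependent ℝ (fun o : Option t ↦ o.elim v (↑)) ∧ (∀ o, 0 < β o) ∧
      ∑ o, β o = 1 ∧ ∑ o, β o • o.elim v (↑) = 0 := by
  obtain ⟨t, c, hts, hc, hind, hsum⟩ := exists_pos_linearIndepOn_sum_smul_eq_of_mem_hull
    (mem_hull_of_zero_mem_interior_convexHull hs (-v))
  have hv : v = -∑ e : t, c e • (e : E) := by rw [sum_coe_sort t fun e ↦ c e • e, hsum, neg_neg]
  have hpos : 0 < 1 + ∑ e : t, c e :=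
    add_pos_of_pos_of_nonneg one_pos (sum_nonneg fun e _ ↦ (hc e e.2).le)
  refine ⟨t, fun o ↦ (1 + ∑ e : t, c e)⁻¹ * o.elim 1 (c ·), hts, ?_, ?_, ?_, ?_⟩
  · rw [hv]
    exact affineIndependent_option_elim hind hpos.ne'
  · rintro (_ | e)
    · exact mul_pos (inv_pos.2 hpos) one_pos
    · exact mul_pos (inv_pos.2 hpos) (hc e e.2)
  · rw [← mul_sum, Fintype.sum_option]
    exact inv_mul_cancel₀ hpos.ne'
  · simp only [mul_smul, ← smul_sum, Fintype.sum_option, Option.elim_none, Option.elim_some,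
      one_smul]
    rw [sum_coe_sort t fun e ↦ c e • e, hsum, add_neg_cancel, smul_zero]

theorem sum_smul_mem_interior [IsTopologicalAddGroup E] [ContinuousConstSMul ℝ E]
    {ι : Type*} [Fintype ι] {s : Set E} (hs : Convex ℝ s) {z : ι → E} (hz : ∀ i, z i ∈ s)
    {c β : ι → ℝ} (hc : ∀ i, 0 < c i) (hc_sum : ∑ i, c i = 1) (hβ_sum : ∑ i, β i = 1)
    (hβ : ∑ i, β i • z i ∈ interior s) : ∑ i, c i • z i ∈ interior s := by
  have hsmall : ∀ᶠ η : ℝ in 𝓝[>] 0, η < 1 ∧ ∀ i, η * β i < c i := by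
    refine nhdsWithin_le_nhds ((gt_mem_nhds one_pos).and (Filter.eventually_all.2 fun i ↦ ?_))
    have hcont : Continuous fun η : ℝ ↦ η * β i := by fun_prop
    exact hcont.tendsto' 0 0 (zero_mul _) |>.eventually (gt_mem_nhds (hc i))
  obtain ⟨η, ⟨hη_one, hηc⟩, hη⟩ := (hsmall.and self_mem_nhdsWithin).exists
  have hη_one' : 0 < 1 - η := sub_pos.2 hη_one
  have hy : ∑ i, ((c i - η * β i) / (1 - η)) • z i ∈ s := by
    refine hs.sum_mem (fun i _ ↦ div_nonneg (sub_nonneg.2 (hηc i).le) hη_one'.le) ?_ fun i _ ↦ hz i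
    rw [← sum_div, sum_sub_distrib, ← mul_sum, hc_sum, hβ_sum, mul_one, div_self hη_one'.ne']
  have hcombo := hs.combo_interior_self_mem_interior hβ hy hη hη_one'.le (add_sub_cancel _ _)
  convert hcombo using 1
  rw [smul_sum, smul_sum, ← sum_add_distrib]
  refine sum_congr rfl fun i _ ↦ ?_
  rw [smul_smul, smul_smul, ← add_smul, mul_div_cancel₀ _ hη_one'.ne', add_sub_cancel]

end Interior

/-! ### Asymmetry of a convex set with a single interior lattice point -/

section Barycentric

variable {E : Type*} [AddCommGroup E] [Module ℝ E] {ι : Type*} [Fintype ι] {s : Set E} {z : ι → E}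
  {β : ι → ℝ}

theorem neg_inv_smul_mem_of_one_le_mul (hs : Convex ℝ s) (hz : ∀ i, z i ∈ s) (hβ : ∀ i, 0 ≤ β i)
    (hβ_sum : ∑ i, β i = 1) (hβ_zero : ∑ i, β i • z i = 0) {ρ : ℝ} (hρ : 0 < ρ) {i : ι}
    (hi : 1 ≤ (1 + ρ) * β i) : -(ρ⁻¹ • z i) ∈ s := by
  classical
  let w : ι → ℝ := fun j ↦ (1 + ρ⁻¹) * β j - Pi.single (M := fun _ ↦ ℝ) i ρ⁻¹ j
  have hw : ∀ j, 0 ≤ w j := by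
    intro j
    obtain rfl | hj := eq_or_ne j i
    · simp only [w, Pi.single_eq_same, sub_nonneg]
      calc ρ⁻¹ ≤ ρ⁻¹ * ((1 + ρ) * β j) := le_mul_of_one_le_right (inv_pos.2 hρ).le hi
        _ = (1 + ρ⁻¹) * β j := by field_simp; ring
    · simp only [w, Pi.single_eq_of_ne hj, sub_zero]
      exact mul_nonneg (by positivity) (hβ j)
  have hw_sum : ∑ j, w j = 1 := by
    simp only [w, sum_sub_distrib, ← mul_sum, hβ_sum, Fintype.sum_pi_single']
    ring
  have hw_smul : ∑ j, w j • z j = -(ρ⁻¹ • z i) := by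
    simp only [w, sub_smul, mul_smul, sum_sub_distrib, ← smul_sum, hβ_zero, smul_zero, zero_sub]
    rw [Fintype.sum_eq_single i fun j hj ↦ by rw [Pi.single_eq_of_ne hj, zero_smul],
      Pi.single_eq_same]
  exact hw_smul ▸ hs.sum_mem (fun j _ ↦ hw j) hw_sum fun j _ ↦ hz j

variable [TopologicalSpace E] [IsTopologicalAddGroup E] [ContinuousConstSMul ℝ E]
  {L : AddSubgroup E} {a : ℕ}

theorem int_eq_mul_of_mul_lt (hs : Convex ℝ s) (hsL : interior s ∩ L = {0}) (ha : 0 < a)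
    (hind : AffineIndependent ℝ z) (hz : ∀ i, z i ∈ s) (hzL : ∀ i, a • z i ∈ L)
    (hβ_sum : ∑ i, β i = 1) (hβ_zero : ∑ i, β i • z i = 0) {q : ℕ} {P : ι → ℤ}
    (hP_sum : ∑ i, P i = q) (hP : ∀ i, a * P i < (1 + a * q) * β i) (i : ι) :
    (P i : ℝ) = q * β i := by
  have hzero : 0 ∈ interior s := (hsL.ge rfl).1
  let c : ι → ℝ := fun i ↦ (1 + a * q) * β i - a * P i
  have hc_sum : ∑ i, c i = 1 := by
    have hP_sum' : ∑ i, (P i : ℝ) = q := mod_cast hP_sum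
    simp only [c, sum_sub_distrib, ← mul_sum, hβ_sum, hP_sum']
    ring
  have hc_smul : ∑ i, c i • z i = -∑ i, P i • a • z i := by
    simp only [c, sub_smul, mul_smul, sum_sub_distrib, ← smul_sum, hβ_zero, smul_zero, zero_sub,
      smul_comm (a : ℝ), Nat.cast_smul_eq_nsmul, Int.cast_smul_eq_zsmul]
  have hc_int : ∑ i, c i • z i ∈ interior s :=
    sum_smul_mem_interior hs hz (fun i ↦ sub_pos.2 (hP i)) hc_sum hβ_sum (hβ_zero ▸ hzero)
  have hc_mem : ∑ i, c i • z i ∈ L :=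
    hc_smul ▸ neg_mem (sum_mem fun i _ ↦ zsmul_mem (hzL i) (P i))
  have hc_zero : ∑ i, c i • z i = 0 := hsL.le ⟨hc_int, hc_mem⟩
  have hcβ : c i = β i := hind.eq_of_sum_eq_sum (hc_sum.trans hβ_sum.symm)
    (hc_zero.trans hβ_zero.symm) i (mem_univ i)
  have ha' : (a : ℝ) ≠ 0 := mod_cast ha.ne'
  refine mul_left_cancel₀ ha' ?_
  simp only [c] at hcβ
  linarith

theorem inv_le_pow_of_affineIndependent (hs : Convex ℝ s) (hsL : interior s ∩ L = {0})
    (ha : 0 < a) (hind : AffineIndependent ℝ z) (hz : ∀ i, z i ∈ s) (hzL : ∀ i, a • z i ∈ L)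
    (hβ : ∀ i, 0 < β i) (hβ_sum : ∑ i, β i = 1) (hβ_zero : ∑ i, β i • z i = 0) (i : ι) :
    (β i)⁻¹ ≤ (4 * ((a : ℝ) + 2)) ^ 2 ^ Fintype.card ι := by
  classical
  have hβ_le (j) : β j ≤ 1 := hβ_sum ▸ single_le_sum (fun k _ ↦ (hβ k).le) (mem_univ j)
  have ha' : (1 : ℝ) ≤ a := mod_cast ha
  refine inv_le_pow_two_pow_card hβ hβ_le (by linarith) (fun J hJ ↦ ?_) i
  by_contra! hsmall
  obtain ⟨q, P, hq, hP_sum, hP_zero, hP⟩ :=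
    exists_int_approx_of_prod_mul_sum_compl_le hβ hβ_sum ha' hJ hsmall
  obtain ⟨j, hj⟩ := hJ
  have hqβ := int_eq_mul_of_mul_lt hs hsL ha hind hz hzL hβ_sum hβ_zero hP_sum hP j
  rw [hP_zero j hj, Int.cast_zero] at hqβ
  exact (mul_pos (Nat.cast_pos.2 hq) (hβ j)).ne hqβ

end Barycentric

theorem neg_inv_smul_mem_convexHull {E : Type*} [AddCommGroup E] [Module ℝ E] [TopologicalSpace E]
    [IsTopologicalAddGroup E] [ContinuousSMul ℝ E] [FiniteDimensional ℝ E] {L : AddSubgroup E}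
    {a : ℕ} (ha : 0 < a) {S : Set E} (hS : ∀ s ∈ S, a • s ∈ L)
    (hSL : interior (convexHull ℝ S) ∩ L = {0}) {ρ : ℝ}
    (hρ : 1 + ρ = (4 * ((a : ℝ) + 2)) ^ 2 ^ (finrank ℝ E + 1)) {x : E} (hx : x ∈ convexHull ℝ S) :
    -(ρ⁻¹ • x) ∈ convexHull ℝ S := by
  have hbase : (1 : ℝ) < 4 * ((a : ℝ) + 2) := by linarith [(a.cast_nonneg : (0 : ℝ) ≤ a)]
  have hρ_pos : 0 < ρ := by linarith [one_lt_pow₀ hbase (pow_ne_zero (finrank ℝ E + 1) two_ne_zero)]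
  have hconv : Convex ℝ {x : E | -(ρ⁻¹ • x) ∈ convexHull ℝ S} :=
    (convex_convexHull ℝ S).neg.smul_preimage ρ⁻¹
  refine convexHull_min (fun v hv ↦ ?_) hconv hx
  obtain ⟨t, β, hts, hind, hβ, hβ_sum, hβ_zero⟩ :=
    exists_affineIndependent_option_elim_sum_smul_eq_zero (hSL.ge rfl).1 v
  have hz : ∀ o : Option t, o.elim v (↑) ∈ S := by
    rintro (_ | e)
    exacts [hv, hts e.2]
  have hcard : Fintype.card (Option t) ≤ finrank ℝ E + 1 :=
    hind.card_le_finrank_succ.trans (Nat.succ_le_succ (Submodule.finrank_le _))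
  have hinv : (β none)⁻¹ ≤ 1 + ρ :=
    calc (β none)⁻¹ ≤ (4 * ((a : ℝ) + 2)) ^ 2 ^ Fintype.card (Option t) :=
          inv_le_pow_of_affineIndependent (convex_convexHull ℝ S) hSL ha hind
            (fun o ↦ subset_convexHull ℝ S (hz o)) (fun o ↦ hS _ (hz o)) hβ hβ_sum hβ_zero none
      _ ≤ (4 * ((a : ℝ) + 2)) ^ 2 ^ (finrank ℝ E + 1) := by gcongr; exacts [hbase.le, one_le_two]
      _ = 1 + ρ := hρ.symm
  exact neg_inv_smul_mem_of_one_le_mul (convex_convexHull ℝ S)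
    (fun o ↦ subset_convexHull ℝ S (hz o)) (fun o ↦ (hβ o).le) hβ_sum hβ_zero hρ_pos
    ((inv_le_iff_one_le_mul₀ (hβ none)).1 hinv)

/-! ### Minkowski's theorem for asymmetric convex sets -/

section Minkowski

open scoped Pointwise

variable {E : Type*} [NormedAddCommGroup E] [NormedSpace ℝ E] [FiniteDimensional ℝ E]
  [MeasurableSpace E] [BorelSpace E] {μ : Measure E} [μ.IsAddHaarMeasure] {L : AddSubgroup E}
  [Countable L] {F s : Set E}

theorem exists_ne_zero_mem_lattice_interior_of_measure_lt (hF : IsAddFundamentalDomain L F μ)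
    {ρ : ℝ} (hρ : 0 < ρ) (hs_neg : ∀ x ∈ s, -(ρ⁻¹ • x) ∈ s) (hs : Convex ℝ s)
    (h : ENNReal.ofReal ((1 + ρ) ^ finrank ℝ E) * μ F < μ s) :
    ∃ x ≠ 0, ((x : L) : E) ∈ interior s := by
  have hρ' : 0 < 1 + ρ := by linarith
  have hvol : μ F < μ ((1 + ρ)⁻¹ • interior s) := by
    rw [Measure.addHaar_smul_of_nonneg μ (inv_nonneg.2 hρ'.le), inv_pow,
      ENNReal.ofReal_inv_of_pos (by positivity), mul_comm, ← div_eq_mul_inv,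
      measure_congr (interior_ae_eq_of_null_frontier (hs.addHaar_frontier μ))]
    rwa [ENNReal.lt_div_iff_mul_lt (.inl (by positivity)) (.inl ENNReal.ofReal_ne_top), mul_comm]
  obtain ⟨x, y, hxy, hxys⟩ := exists_pair_mem_lattice_not_disjoint_vadd hF
    ((hs.interior.smul _).nullMeasurableSet μ) hvol
  obtain ⟨_, ⟨v, hv, rfl⟩, w, hw, hvw⟩ := Set.not_disjoint_iff.1 hxys
  rw [Set.mem_inv_smul_set_iff₀ hρ'.ne'] at hv hw
  refine ⟨x - y, sub_ne_zero.2 hxy, ?_⟩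
  have hsub : ((x - y : L) : E) = w - v := by
    simp only [AddSubgroup.vadd_def, vadd_eq_add] at hvw
    rw [AddSubgroup.coe_sub, sub_eq_sub_iff_add_eq_add, hvw.symm, add_comm]
  have hcombo : (1 + ρ)⁻¹ • ((1 + ρ) • w) + (ρ * (1 + ρ)⁻¹) • -(ρ⁻¹ • ((1 + ρ) • v)) = w - v := by
    match_scalars <;> field_simp
  rw [hsub, ← hcombo]
  refine hs.combo_interior_self_mem_interior hw (hs_neg _ (interior_subset hv)) (by positivity)
    (by positivity) (by field_simp)

theorem measure_convexHull_le_of_interior_inter_eq_singleton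
    (hF : IsAddFundamentalDomain L F μ) {a : ℕ} (ha : 0 < a) {S : Set E} (hS : ∀ s ∈ S, a • s ∈ L)
    (hSL : interior (convexHull ℝ S) ∩ L = {0}) :
    μ (convexHull ℝ S) ≤
      ENNReal.ofReal ((4 * ((a : ℝ) + 2)) ^ (finrank ℝ E * 2 ^ (finrank ℝ E + 1))) * μ F := by
  let ρ : ℝ := (4 * ((a : ℝ) + 2)) ^ 2 ^ (finrank ℝ E + 1) - 1
  have hρ : 1 + ρ = (4 * ((a : ℝ) + 2)) ^ 2 ^ (finrank ℝ E + 1) := add_sub_cancel _ _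
  have hbase : (1 : ℝ) < 4 * ((a : ℝ) + 2) := by linarith [(a.cast_nonneg : (0 : ℝ) ≤ a)]
  have hρ_pos : 0 < ρ := sub_pos.2 (one_lt_pow₀ hbase (pow_ne_zero _ two_ne_zero))
  by_contra! hlt
  rw [mul_comm (finrank ℝ E), pow_mul, ← hρ] at hlt
  obtain ⟨x, hx_ne, hx⟩ := exists_ne_zero_mem_lattice_interior_of_measure_lt hF hρ_pos
    (fun _ ↦ neg_inv_smul_mem_convexHull ha hS hSL hρ) (convex_convexHull ℝ S) hlt
  exact hx_ne (Subtype.ext (hSL.le ⟨hx, x.2⟩))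

end Minkowski

/-! ### The standard lattice -/

theorem isLatticePoint_iff_mem_span {n : ℕ} {u : Fin n → ℝ} :
    IsLatticePoint u ↔ u ∈ Submodule.span ℤ (Set.range (Pi.basisFun ℝ (Fin n))) := by
  simp only [IsLatticePoint, Basis.mem_span_iff_repr_mem, Pi.basisFun_repr, Set.mem_range,
    algebraMap_int_eq, eq_intCast, eq_comm]

theorem volume_fundamentalDomain_pi_basisFun (ι : Type*) [Fintype ι] :
    volume (ZSpan.fundamentalDomain (Pi.basisFun ℝ ι)) = 1 := by
  simp [ZSpan.fundamentalDomain_pi_basisFun, volume_pi_pi]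

theorem stmt12_general {n a : ℕ} (ha : 0 < a) {S : Set (Fin n → ℝ)}
    (hS : ∀ s ∈ S, ∀ i, ∃ m : ℤ, s i = (m : ℝ) / a)
    (hint : {u ∈ interior (convexHull ℝ S) | IsLatticePoint u} = {0}) :
    volume (convexHull ℝ S) ≤ ENNReal.ofReal ((4 * ((a : ℝ) + 2)) ^ (n * 2 ^ (n + 1))) := by
  let b := Pi.basisFun ℝ (Fin n)
  let L := (Submodule.span ℤ (Set.range b)).toAddSubgroup
  have : Countable L := inferInstanceAs (Countable (Submodule.span ℤ (Set.range b)))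
  have hSL : ∀ s ∈ S, a • s ∈ L := fun s hs ↦ isLatticePoint_iff_mem_span.1 fun i ↦
    (hS s hs i).imp fun m hm ↦ by
      rw [Pi.smul_apply, hm, nsmul_eq_mul, mul_div_cancel₀ _ (by positivity)]
  have hL : interior (convexHull ℝ S) ∩ L = {0} :=
    (Set.ext fun _ ↦ and_congr_right' isLatticePoint_iff_mem_span.symm).trans hint
  have hvol := measure_convexHull_le_of_interior_inter_eq_singleton
    (ZSpan.isAddFundamentalDomain' b volume) ha hSL hL
  rwa [volume_fundamentalDomain_pi_basisFun, mul_one, finrank_fin_fun] at hvol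

/-- Volume bound from the proof of Theorem 3.7.  Let `n, a ≥ 1` and let `Q ⊆ ℝⁿ` be
a convex polytope all of whose vertices lie in `(1/a)·ℤⁿ`, such that the only point
of `ℤⁿ` in the interior of `Q` is `0`.  Then `vol(Q) ≤ (7(a+1))^(n·2^(n+1))`. -/
theorem stmt12 (n a : ℕ) (hn : 0 < n) (ha : 0 < a)
    (S : Finset (Fin n → ℝ))
    (hSlat : ∀ s ∈ S, ∀ i, ∃ m : ℤ, s i = (m : ℝ) / (a : ℝ))
    (Q : Set (Fin n → ℝ)) (hQ : Q = convexHull ℝ (S : Set (Fin n → ℝ)))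
    (hint : {u ∈ interior Q | IsLatticePoint u} = {0}) :
    MeasureTheory.volume Q ≤
      ENNReal.ofReal ((7 * ((a : ℝ) + 1)) ^ (n * 2 ^ (n + 1))) := by
  subst hQ
  refine (stmt12_general ha hSlat hint).trans ?_
  gcongr ENNReal.ofReal (?_ ^ _)
  linarith [(Nat.one_le_cast (α := ℝ)).2 ha]
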